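/- Affine upper bound for the fixed-β₁ function of V: let h be the function defined on (1, ∞) by h(v) = 1/2 + 3(v − 1)·(v − 2 + √(v(v−1)))/(3v − 4) for v ≠ 4/3, extended by continuity at v = 4/3. Then for every real v ≥ 1.126983, h(v) ≤ 2.2377·v − 1.7173. -/

import Mathlib

/-!
Put `t = √(1 - 1/v)`, so that `v = 1 / (1 - t²)` and `√(v(v-1)) = v t`. In terms of `t` the
numerator and the denominator of the fraction in `h` share the factor `2t - 1`, which vanishes
exactly at `v = 4/3`, and cancelling it leaves `h = 1/2 + 3t² / ((1 - t)(1 + 2t))`. Clearing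
denominators turns an affine bound on `h` into the nonnegativity of a cubic in `t` on `[0, 1)`.
-/

open Filter Topology

/-- The parameter `t = √(1 - 1/v) ∈ [0, 1)` that rationalises `√(v(v-1))` for `v ≥ 1`. -/
noncomputable def rootParam (v : ℝ) : ℝ := √(1 - v⁻¹)

/-- The fixed-`β₁` function `h` in terms of `t = rootParam v`, with the removable singularity at
`t = 1/2` (that is, `v = 4/3`) cancelled. -/
noncomputable def reducedFixedBeta (t : ℝ) : ℝ := 1 / 2 + 3 * t ^ 2 / ((1 - t) * (1 + 2 * t))

section

variable {a b t v : ℝ}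

lemma rootParam_nonneg (v : ℝ) : 0 ≤ rootParam v := Real.sqrt_nonneg _

lemma rootParam_lt_one (hv : 0 < v) : rootParam v < 1 := by
  rw [rootParam, Real.sqrt_lt' one_pos, one_pow]
  exact sub_lt_self 1 (inv_pos.2 hv)

lemma rootParam_sq (hv : 1 ≤ v) : rootParam v ^ 2 = 1 - v⁻¹ :=
  Real.sq_sqrt (sub_nonneg.2 (inv_le_one_of_one_le₀ hv))

lemma one_div_one_sub_rootParam_sq (hv : 1 ≤ v) : 1 / (1 - rootParam v ^ 2) = v := by
  rw [rootParam_sq hv, sub_sub_cancel, one_div, inv_inv]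

lemma sqrt_mul_sub_one_eq_mul_rootParam (hv : 0 ≤ v) : √(v * (v - 1)) = v * rootParam v := by
  have hfactor : v * (v - 1) = v ^ 2 * (1 - v⁻¹) := by
    rcases eq_or_ne v 0 with rfl | hv0
    · simp
    · field_simp
  rw [hfactor, Real.sqrt_mul (sq_nonneg v), Real.sqrt_sq hv, rootParam]

lemma continuousAt_rootParam (hv : v ≠ 0) : ContinuousAt rootParam v :=
  (continuousAt_const.sub (continuousAt_inv₀ hv)).sqrt

lemma continuousAt_reducedFixedBeta (ht : -1 / 2 < t) (ht1 : t < 1) :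
    ContinuousAt reducedFixedBeta t := by
  have hden : (1 - t) * (1 + 2 * t) ≠ 0 :=
    mul_ne_zero (by linarith) (by linarith)
  unfold reducedFixedBeta
  fun_prop (disch := exact hden)

lemma fixedBeta_formula_eq_reducedFixedBeta (ht : -1 / 2 < t) (ht1 : t < 1) (ht2 : t ≠ 1 / 2)
    (hv : 1 / (1 - t ^ 2) = v) :
    1 / 2 + 3 * (v - 1) * (v - 2 + v * t) / (3 * v - 4) = reducedFixedBeta t := by
  have hsub : 1 - t ≠ 0 := by linarith
  have hadd : 1 + 2 * t ≠ 0 := by linarith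
  have hsq : 1 - t ^ 2 ≠ 0 := by nlinarith
  have hcancel : 2 * t - 1 ≠ 0 := fun h => ht2 (by linarith)
  have hv_sub_one : v - 1 = t ^ 2 / (1 - t ^ 2) := by
    rw [← hv]; field_simp; ring
  have hnum : v - 2 + v * t = (2 * t - 1) * (1 + t) / (1 - t ^ 2) := by
    rw [← hv]; field_simp; ring
  have hden : 3 * v - 4 = (2 * t - 1) * (1 + 2 * t) / (1 - t ^ 2) := by
    rw [← hv]; field_simp; ring
  rw [hv_sub_one, hnum, hden, reducedFixedBeta]
  field_simp
  ring

lemma eq_reducedFixedBeta_rootParam {h : ℝ → ℝ}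
    (hspec : ∀ v : ℝ, 1 < v → v ≠ 4 / 3 →
      h v = 1 / 2 + 3 * (v - 1) * (v - 2 + √(v * (v - 1))) / (3 * v - 4))
    (hcont : ContinuousAt h (4 / 3)) (hv : 1 < v) :
    h v = reducedFixedBeta (rootParam v) := by
  have hrange {w : ℝ} (hw : 1 < w) : -1 / 2 < rootParam w ∧ rootParam w < 1 :=
    ⟨by linarith [rootParam_nonneg w], rootParam_lt_one (by linarith)⟩
  have hne {w : ℝ} (hw : 1 < w) (hw' : w ≠ 4 / 3) :
      h w = reducedFixedBeta (rootParam w) := by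
    have hinv := one_div_one_sub_rootParam_sq hw.le
    have hhalf : rootParam w ≠ 1 / 2 := fun ht => hw' (by rw [← hinv, ht]; norm_num)
    rw [hspec w hw hw', sqrt_mul_sub_one_eq_mul_rootParam (by linarith)]
    exact fixedBeta_formula_eq_reducedFixedBeta (hrange hw).1 (hrange hw).2 hhalf hinv
  rcases eq_or_ne v (4 / 3) with rfl | hv'
  · have hpunctured : h =ᶠ[𝓝[≠] (4 / 3)] reducedFixedBeta ∘ rootParam := by
      filter_upwards [self_mem_nhdsWithin, mem_nhdsWithin_of_mem_nhds (Ioi_mem_nhds hv)]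
        with w hw' hw using hne hw hw'
    have hreduced : ContinuousAt (reducedFixedBeta ∘ rootParam) (4 / 3) :=
      (continuousAt_reducedFixedBeta (hrange hv).1 (hrange hv).2).comp
        (continuousAt_rootParam (by norm_num))
    exact ((hcont.eventuallyEq_nhds_iff_eventuallyEq_nhdsNE hreduced).1 hpunctured).eq_of_nhds
  · exact hne hv hv'

lemma reducedFixedBeta_le_iff_cubic_nonneg (ht : -1 / 2 < t) (ht1 : t < 1) :
    reducedFixedBeta t ≤ a * (1 / (1 - t ^ 2)) - b ↔
      0 ≤ 2 * (b - 1) * t ^ 3 + (b - 5 / 2) * t ^ 2 + 2 * (a - b - 1 / 2) * t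
        + (a - b - 1 / 2) := by
  have hsub : 0 < 1 - t := by linarith
  have hadd : 0 < 1 + t := by linarith
  have hden : 0 < 1 + 2 * t := by linarith
  have hfactor : 1 - t ^ 2 = (1 - t) * (1 + t) := by ring
  have hdiff : (2 * (b - 1) * t ^ 3 + (b - 5 / 2) * t ^ 2 + 2 * (a - b - 1 / 2) * t
        + (a - b - 1 / 2)) / ((1 - t) * (1 + t) * (1 + 2 * t)) =
      a * (1 / (1 - t ^ 2)) - b - reducedFixedBeta t := by
    rw [reducedFixedBeta, hfactor]
    field_simp
    ring
  rw [← sub_nonneg, ← hdiff, le_div_iff₀ (by positivity), zero_mul]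

lemma fixedBeta_cubic_nonneg (ht : 0 ≤ t) :
    0 ≤ 1.4346 * t ^ 3 - 0.7827 * t ^ 2 + 0.0408 * t + 0.0204 := by
  -- The cubic nearly has a double root at its local minimum `t ≈ 0.3355`.
  have hmain : 0 ≤ (t - 0.3355) ^ 2 * (1.4346 * t + 0.1799) := by positivity
  linarith [sq_nonneg t]

end

theorem affine_bound_fixed_beta_general (h : ℝ → ℝ)
    (hspec : ∀ v : ℝ, 1 < v → v ≠ 4 / 3 →
      h v = 1 / 2 + 3 * (v - 1) * (v - 2 + Real.sqrt (v * (v - 1))) / (3 * v - 4))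
    (hcont : ContinuousAt h (4 / 3)) :
    ∀ v : ℝ, 1 < v → h v ≤ 2.2377 * v - 1.7173 := by
  intro v hv
  have ht : 0 ≤ rootParam v := rootParam_nonneg v
  have ht1 : rootParam v < 1 := rootParam_lt_one (by linarith)
  have hreduced : reducedFixedBeta (rootParam v) ≤
      2.2377 * (1 / (1 - rootParam v ^ 2)) - 1.7173 := by
    rw [reducedFixedBeta_le_iff_cubic_nonneg (by linarith) ht1]
    convert fixedBeta_cubic_nonneg ht using 1
    ring
  rwa [one_div_one_sub_rootParam_sq hv.le, ← eq_reducedFixedBeta_rootParam hspec hcont hv]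
    at hreduced

/-- affine upper bound for the fixed-`β₁` function of `V`.  Let `h` be
the function given by `h(v) = 1/2 + 3(v − 1)(v − 2 + √(v(v−1)))/(3v − 4)` for
`v ≠ 4/3`, extended by continuity at `v = 4/3`.  Then for every `v ≥ 1.126983`,
`h(v) ≤ 2.2377 v − 1.7173`. -/
theorem affine_bound_fixed_beta (h : ℝ → ℝ)
    (hspec : ∀ v : ℝ, 1 < v → v ≠ 4 / 3 →
      h v = 1 / 2 + 3 * (v - 1) * (v - 2 + Real.sqrt (v * (v - 1))) / (3 * v - 4))
    (hcont : ContinuousAt h (4 / 3)) :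
    ∀ v : ℝ, 1.126983 ≤ v → h v ≤ 2.2377 * v - 1.7173 := by
  intro v hv
  exact affine_bound_fixed_beta_general h hspec hcont v (lt_of_lt_of_le (by norm_num) hv)
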